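/- Fix a positive integer n ≥ 2. Let E(s) := (Σ_{(α,β) ∈ C(s,n)×C(s,n)} EMD(α, β)) / C(s+n−1, s)² denote the expected EMD over uniformly random pairs from C(s,n) × C(s,n). Then lim_{s→∞} E(s)/s = √π · (n−1) · Γ(n) / (4 · Γ(n + 1/2)), where Γ denotes the real Gamma function. (Remark 4.4.) -/

import Mathlib

/-!
The `j`-th summand of `EMD α β` is `|A - A'|`, where `A`, `A'` are the sums of the first `j` parts
of `α`, `β`. For independent copies of a variable with values in `{0, …, s}`, the mean of
`|A - A'|` is `2 ∑ p (1 - p)`, where `p` runs over the tail probabilities `P(t + 1 ≤ A)`, `t < s`.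
By stars and bars, `t ≤ A` says that among `s + m` symbols containing `m = n - 1` bars, fewer than
`j` bars lie in a block of the first `t + j - 1`; as `s → ∞` with `t / s → x`, this hypergeometric
probability tends to `P(B < j)` with `B` binomial with parameters `m` and `x`. Dividing by `s`
turns the sum over `t` into a Riemann sum, so the limit is `∫₀¹ E|B - B'| dx`.

Adding one trial to each of `B` and `B'` changes `E|B - B'| / 2 = ∑ F (1 - F)`, with `F` the
distribution function, by exactly `x (1 - x) P(B = B')`. The integral of this increment is a sum of
Beta integrals, evaluated by the Vandermonde convolution for `(1 - 4 x) ^ (-3 / 2)`. The resulting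
recursion in `m` has a factorial solution, which the duplication formula turns into `Γ`-values.
-/

open Finset

/-- The one-dimensional earth mover's distance between two weak compositions
`α, β` of the same number `s` into `n` parts:
`EMD(α,β) = Σ_{j=1}^n |Σ_{i=1}^j (α_i - β_i)|`. -/
def EMD {n : ℕ} (α β : Fin n → ℕ) : ℕ :=
  ∑ j : Fin n, (∑ i ∈ Finset.univ.filter (fun i : Fin n => i ≤ j),
      ((α i : ℤ) - (β i : ℤ))).natAbs

open Filter Finset.Nat
open scoped Nat Topology Polynomial
open Polynomial (X)

/-! ### Prefix sums of weak compositions -/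

/-- The sum of the first `j` parts of a composition, capped at the sum of all `n` parts when
`j > n`. -/
def prefixSum {n : ℕ} (j : ℕ) (α : Fin n → ℕ) : ℕ := ∑ i with i.val < j, α i

lemma EMD_eq_sum_natAbs_prefixSum_sub {n : ℕ} (α β : Fin n → ℕ) :
    EMD α β = ∑ j ∈ range n, ((prefixSum (j + 1) α : ℤ) - prefixSum (j + 1) β).natAbs := by
  rw [← Fin.sum_univ_eq_sum_range
    fun j ↦ ((prefixSum (j + 1) α : ℤ) - prefixSum (j + 1) β).natAbs]
  simp only [EMD, prefixSum, Fin.le_def, Nat.lt_succ_iff, Nat.cast_sum, sum_sub_distrib]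

lemma prefixSum_zero {n : ℕ} (α : Fin n → ℕ) : prefixSum 0 α = 0 := by
  simp [prefixSum]

lemma prefixSum_succ_cons {n : ℕ} (j a : ℕ) (α : Fin n → ℕ) :
    prefixSum (j + 1) (Fin.cons a α : Fin (n + 1) → ℕ) = a + prefixSum j α := by
  simp [prefixSum, sum_filter, Fin.sum_univ_succ]

lemma prefixSum_succ_cons_succ_tail {n : ℕ} (j : ℕ) (α : Fin (n + 1) → ℕ) :
    prefixSum (j + 1) (Fin.cons (α 0 + 1) (Fin.tail α) : Fin (n + 1) → ℕ) =
      prefixSum (j + 1) α + 1 := by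
  conv_rhs => rw [← Fin.cons_self_tail α]
  simp only [prefixSum_succ_cons]
  omega

lemma prefixSum_le_of_mem_antidiagonalTuple {n s : ℕ} {α : Fin n → ℕ} (j : ℕ)
    (hα : α ∈ antidiagonalTuple n s) : prefixSum j α ≤ s := by
  rw [← mem_antidiagonalTuple.mp hα]
  exact sum_le_sum_of_subset (filter_subset _ _)

lemma sum_antidiagonalTuple_succ {M : Type*} [AddCommMonoid M] (n s : ℕ)
    (f : (Fin (n + 1) → ℕ) → M) :
    ∑ α ∈ antidiagonalTuple (n + 1) s, f α =
      ∑ p ∈ antidiagonal s, ∑ β ∈ antidiagonalTuple n p.2, f (Fin.cons p.1 β) := by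
  simp [Finset.sum, antidiagonalTuple, Multiset.Nat.antidiagonalTuple, List.Nat.antidiagonalTuple,
    HasAntidiagonal.antidiagonal, Multiset.Nat.antidiagonal, List.flatMap, List.map_flatten,
    List.sum_flatten, Function.comp_def]

lemma sum_antidiagonalTuple_succ_succ {M : Type*} [AddCommMonoid M] (n s : ℕ)
    (f : (Fin (n + 1) → ℕ) → M) :
    ∑ α ∈ antidiagonalTuple (n + 1) (s + 1), f α =
      ∑ β ∈ antidiagonalTuple n (s + 1), f (Fin.cons 0 β) +
        ∑ α ∈ antidiagonalTuple (n + 1) s, f (Fin.cons (α 0 + 1) (Fin.tail α)) := by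
  simp [sum_antidiagonalTuple_succ, sum_antidiagonal_succ]

lemma card_filter_antidiagonalTuple_succ_succ (n s : ℕ) (P : (Fin (n + 1) → ℕ) → Prop)
    [DecidablePred P] :
    #{α ∈ antidiagonalTuple (n + 1) (s + 1) | P α} =
      #{β ∈ antidiagonalTuple n (s + 1) | P (Fin.cons 0 β)} +
        #{α ∈ antidiagonalTuple (n + 1) s | P (Fin.cons (α 0 + 1) (Fin.tail α))} := by
  simp only [card_filter, sum_antidiagonalTuple_succ_succ]

lemma card_antidiagonalTuple (n s : ℕ) : #(antidiagonalTuple n s) = Nat.multichoose n s := by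
  induction n generalizing s with
  | zero => cases s <;> simp
  | succ n ihn =>
    induction s with
    | zero => simp [antidiagonalTuple_zero_right]
    | succ s ihs =>
      rw [Nat.multichoose_succ_succ, ← ihn, ← ihs]
      simpa using card_filter_antidiagonalTuple_succ_succ n s fun _ ↦ True

lemma card_antidiagonalTuple_succ (n s : ℕ) :
    #(antidiagonalTuple (n + 1) s) = (s + n).choose n := by
  rw [card_antidiagonalTuple, Nat.multichoose_eq, show n + 1 + s - 1 = s + n by omega,
    Nat.choose_symm_add]

lemma sum_range_choose_mul_choose (j l u : ℕ) :
    ∑ k ∈ range (j + 1), j.choose k * (u + l).choose (l + j - k) = (u + l + j).choose (l + j) := by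
  rw [add_comm (u + l) j, add_comm l j, Nat.add_choose_eq,
    sum_antidiagonal_eq_sum_range_succ fun a b ↦ j.choose a * (u + l).choose b]
  refine sum_subset (range_mono (by omega)) fun k _ hk ↦ ?_
  rw [Nat.choose_eq_zero_of_lt (by simpa using hk), zero_mul]

lemma sum_range_succ_choose_succ_mul (N j : ℕ) (c : ℕ → ℕ) :
    ∑ k ∈ range (j + 1), (N + 1).choose k * c k =
      ∑ k ∈ range j, N.choose k * c (k + 1) + ∑ k ∈ range (j + 1), N.choose k * c k := by
  simp only [sum_range_succ' _ j, Nat.choose_succ_succ, Nat.choose_zero_right, add_mul,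
    sum_add_distrib, add_assoc]

lemma card_succ_le_prefixSum_succ (n j s t : ℕ) :
    #{α ∈ antidiagonalTuple (n + 1) (s + 1) | t + 1 ≤ prefixSum (j + 1) α} =
      #{β ∈ antidiagonalTuple n (s + 1) | t + 1 ≤ prefixSum j β} +
        #{α ∈ antidiagonalTuple (n + 1) s | t ≤ prefixSum (j + 1) α} := by
  rw [card_filter_antidiagonalTuple_succ_succ]
  simp only [prefixSum_succ_cons_succ_tail, add_le_add_iff_right]
  simp only [prefixSum_succ_cons, zero_add]

-- Stars and bars: `k` is the number of bars among the first `t + j` symbols of the word in `t + u`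
-- stars and `l + j` bars that encodes `α`. Both sides obey the same Pascal recursion.
theorem card_le_prefixSum (l j t u : ℕ) :
    #{α ∈ antidiagonalTuple (l + j + 1) (t + u) | t ≤ prefixSum (j + 1) α} =
      ∑ k ∈ range (j + 1), (t + j).choose k * (u + l).choose (l + j - k) := by
  induction t generalizing j with
  | zero => simp [card_antidiagonalTuple_succ, sum_range_choose_mul_choose, ← add_assoc]
  | succ t iht =>
    induction j with
    | zero =>
      rw [Nat.add_right_comm t 1 u, card_succ_le_prefixSum_succ]
      simpa [prefixSum_zero] using iht 0
    | succ j ihj =>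
      rw [Nat.add_right_comm t 1 u] at ihj ⊢
      rw [card_succ_le_prefixSum_succ, iht, ← add_assoc l j 1, ihj,
        Nat.add_right_comm t 1 (j + 1), sum_range_succ_choose_succ_mul (t + (j + 1)) (j + 1)]
      simp only [← add_assoc, Nat.add_sub_add_right, Nat.add_right_comm t 1 j]

/-! ### Mean absolute differences -/

lemma tsub_eq_card_filter_range {a b s : ℕ} (ha : a ≤ s) :
    a - b = #{t ∈ range s | t + 1 ≤ a ∧ ¬ t + 1 ≤ b} := by
  rw [← Nat.card_Ico]
  congr 1
  ext t
  simp only [mem_Ico, mem_filter, mem_range]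
  omega

theorem sum_product_natAbs_sub {ι : Type*} (S : Finset ι) (f : ι → ℕ) {s : ℕ}
    (hf : ∀ x ∈ S, f x ≤ s) :
    ∑ p ∈ S ×ˢ S, ((f p.1 : ℤ) - f p.2).natAbs =
      2 * ∑ t ∈ range s, #{x ∈ S | t + 1 ≤ f x} * #{x ∈ S | ¬ t + 1 ≤ f x} := by
  have natAbs_eq (a b : ℕ) : ((a : ℤ) - b).natAbs = (a - b) + (b - a) := by omega
  have swap : ∑ p ∈ S ×ˢ S, (f p.2 - f p.1) = ∑ p ∈ S ×ˢ S, (f p.1 - f p.2) := by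
    rw [sum_product, sum_product_right]
  simp only [natAbs_eq, sum_add_distrib, swap, ← two_mul]
  congr 1
  calc ∑ p ∈ S ×ˢ S, (f p.1 - f p.2)
      = ∑ p ∈ S ×ˢ S, #{t ∈ range s | t + 1 ≤ f p.1 ∧ ¬ t + 1 ≤ f p.2} :=
        sum_congr rfl fun p hp ↦ tsub_eq_card_filter_range (hf _ (mem_product.mp hp).1)
    _ = ∑ t ∈ range s, #{p ∈ S ×ˢ S | t + 1 ≤ f p.1 ∧ ¬ t + 1 ≤ f p.2} :=
        sum_card_bipartiteAbove_eq_sum_card_bipartiteBelow _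
    _ = ∑ t ∈ range s, #{x ∈ S | t + 1 ≤ f x} * #{x ∈ S | ¬ t + 1 ≤ f x} := by
        simp only [← card_product, ← filter_product]

theorem sum_product_natAbs_sub_div_card_sq {ι : Type*} (S : Finset ι) (f : ι → ℕ) {s : ℕ}
    (hf : ∀ x ∈ S, f x ≤ s) :
    ((∑ p ∈ S ×ˢ S, ((f p.1 : ℤ) - f p.2).natAbs : ℕ) : ℝ) / #S ^ 2 =
      2 * ∑ t ∈ range s,
        (#{x ∈ S | t + 1 ≤ f x} / #S : ℝ) * (1 - #{x ∈ S | t + 1 ≤ f x} / #S) := by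
  rcases S.eq_empty_or_nonempty with rfl | hS
  · simp
  have hcard : (#S : ℝ) ≠ 0 := by exact_mod_cast hS.card_ne_zero
  rw [sum_product_natAbs_sub S f hf]
  push_cast
  rw [mul_div_assoc, sum_div]
  congr 1
  refine sum_congr rfl fun t _ ↦ ?_
  have hcompl : (#{x ∈ S | ¬ t + 1 ≤ f x} : ℝ) = #S - #{x ∈ S | t + 1 ≤ f x} := by
    rw [eq_sub_iff_add_eq', ← Nat.cast_add, card_filter_add_card_filter_not]
  rw [hcompl]
  field_simp

/-- The probability that the first `j` parts of a uniformly random weak composition of `s` into `n`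
parts sum to at least `t`. -/
noncomputable def tailProb (n s j t : ℕ) : ℝ :=
  #{α ∈ antidiagonalTuple n s | t ≤ prefixSum j α} / #(antidiagonalTuple n s)

lemma tailProb_nonneg (n s j t : ℕ) : 0 ≤ tailProb n s j t := by
  unfold tailProb
  positivity

lemma tailProb_le_one (n s j t : ℕ) : tailProb n s j t ≤ 1 :=
  div_le_one_of_le₀ (by exact_mod_cast card_filter_le _ _) (by positivity)

lemma tailProb_eq_sum_choose_div {l j s t : ℕ} (hts : t ≤ s) :
    tailProb (l + j + 1) s (j + 1) t =
      (∑ k ∈ range (j + 1), ((t + j).choose k * (s - t + l).choose (l + j - k) : ℝ)) /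
        (s + (l + j)).choose (l + j) := by
  have hcount := card_le_prefixSum l j t (s - t)
  rw [Nat.add_sub_cancel' hts] at hcount
  rw [tailProb, hcount, card_antidiagonalTuple_succ]
  push_cast
  rfl

theorem sum_EMD_div_card_sq (n s : ℕ) :
    ((∑ p ∈ antidiagonalTuple n s ×ˢ antidiagonalTuple n s, EMD p.1 p.2 : ℕ) : ℝ) /
        #(antidiagonalTuple n s) ^ 2 =
      ∑ j ∈ range n,
        2 * ∑ t ∈ range s, tailProb n s (j + 1) (t + 1) * (1 - tailProb n s (j + 1) (t + 1)) := by
  simp only [EMD_eq_sum_natAbs_prefixSum_sub]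
  rw [sum_comm, Nat.cast_sum, sum_div]
  exact sum_congr rfl fun j _ ↦ sum_product_natAbs_sub_div_card_sq _ (prefixSum (j + 1))
    fun α ↦ prefixSum_le_of_mem_antidiagonalTuple (j + 1)

/-! ### Binomial distribution functions -/

/-- The probability that a binomial variable with `m` trials of success probability `X` is less than
`j`, as a polynomial in `X`. -/
noncomputable def bernsteinSum (R : Type*) [CommRing R] (m j : ℕ) : R[X] :=
  ∑ k ∈ range j, bernsteinPolynomial R m k

/-- Half the mean absolute difference of two independent binomial variables with `m` trials of
success probability `X`, as a polynomial in `X`. -/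
noncomputable def bernsteinSpread (R : Type*) [CommRing R] (m : ℕ) : R[X] :=
  ∑ j ∈ range (m + 1), bernsteinSum R m (j + 1) * (1 - bernsteinSum R m (j + 1))

section

variable (R : Type*) [CommRing R]

lemma bernsteinPolynomial_succ_zero (m : ℕ) :
    bernsteinPolynomial R (m + 1) 0 = (1 - X) * bernsteinPolynomial R m 0 := by
  simp [bernsteinPolynomial, pow_succ']

lemma bernsteinPolynomial_succ_succ (m k : ℕ) :
    bernsteinPolynomial R (m + 1) (k + 1) =
      (1 - X) * bernsteinPolynomial R m (k + 1) + X * bernsteinPolynomial R m k := by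
  rcases lt_or_ge k m with h | h
  · simp only [bernsteinPolynomial, Nat.choose_succ_succ, Nat.add_sub_add_right,
      show m - k = m - (k + 1) + 1 by omega]
    push_cast
    ring
  · rw [bernsteinPolynomial.eq_zero_of_lt R (show m < k + 1 by omega)]
    simp only [bernsteinPolynomial, Nat.choose_succ_succ, Nat.add_sub_add_right,
      Nat.choose_eq_zero_of_lt (show m < k + 1 by omega)]
    push_cast
    ring

lemma bernsteinSum_succ (m j : ℕ) :
    bernsteinSum R m (j + 1) = bernsteinSum R m j + bernsteinPolynomial R m j :=
  sum_range_succ _ _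

lemma bernsteinSum_succ_succ (m j : ℕ) :
    bernsteinSum R (m + 1) (j + 1) =
      (1 - X) * bernsteinSum R m (j + 1) + X * bernsteinSum R m j := by
  simp only [bernsteinSum, sum_range_succ' _ j, bernsteinPolynomial_succ_zero,
    bernsteinPolynomial_succ_succ, sum_add_distrib, ← mul_sum]
  ring

lemma bernsteinSum_self_succ (m : ℕ) : bernsteinSum R m (m + 1) = 1 :=
  bernsteinPolynomial.sum R m

theorem bernsteinSpread_succ (m : ℕ) :
    bernsteinSpread R (m + 1) = bernsteinSpread R m +
      X * (1 - X) * ∑ k ∈ range (m + 1), bernsteinPolynomial R m k ^ 2 := by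
  have pascal (j : ℕ) :
      bernsteinSum R (m + 1) (j + 1) * (1 - bernsteinSum R (m + 1) (j + 1)) =
        (1 - X) * (bernsteinSum R m (j + 1) * (1 - bernsteinSum R m (j + 1))) +
          X * (bernsteinSum R m j * (1 - bernsteinSum R m j)) +
          X * (1 - X) * bernsteinPolynomial R m j ^ 2 := by
    rw [bernsteinSum_succ_succ, bernsteinSum_succ]
    ring
  have shift : bernsteinSpread R m =
      ∑ j ∈ range (m + 1), bernsteinSum R m j * (1 - bernsteinSum R m j) := by
    rw [bernsteinSpread, sum_range_succ, sum_range_succ', bernsteinSum_self_succ]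
    simp [bernsteinSum]
  have last : bernsteinSum R (m + 1) (m + 1 + 1) *
      (1 - bernsteinSum R (m + 1) (m + 1 + 1)) = 0 := by
    rw [bernsteinSum_self_succ, sub_self, mul_zero]
  rw [bernsteinSpread, sum_range_succ, last, add_zero]
  simp only [pascal, sum_add_distrib, ← mul_sum]
  rw [← shift, ← bernsteinSpread]
  ring

end

/-! ### The scaling limit -/

lemma tendsto_choose_div_pow {ι : Type*} {l : Filter ι} {a b : ι → ℕ} {y : ℝ}
    (hb : Tendsto b l atTop) (hab : Tendsto (fun i ↦ (a i / b i : ℝ)) l (𝓝 y)) (c k : ℕ) :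
    Tendsto (fun i ↦ ((a i + c).choose k : ℝ) / (b i : ℝ) ^ k) l (𝓝 (y ^ k / k !)) := by
  have hfactor (d : ℕ) : Tendsto (fun i ↦ (((a i + c : ℕ) : ℝ) - d) / b i) l (𝓝 y) := by
    have hconst := (tendsto_const_div_atTop_nhds_zero_nat ((c : ℝ) - d)).comp hb
    simpa [← add_div, add_sub_assoc] using hab.add hconst
  have hprod := (tendsto_finsetProd (range k) fun d _ ↦ hfactor d).div_const (k ! : ℝ)
  rw [prod_const, card_range] at hprod
  refine hprod.congr fun i ↦ ?_
  rw [Nat.cast_choose_eq_descPochhammer_div, descPochhammer_eval_eq_prod_range, prod_div_distrib,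
    prod_const, card_range, div_right_comm]

lemma eval_bernsteinSum {K : Type*} [Field K] [CharZero K] {m j : ℕ} (hj : j ≤ m + 1) (x : K) :
    (bernsteinSum K m j).eval x =
      m ! * ∑ k ∈ range j, x ^ k / k ! * ((1 - x) ^ (m - k) / (m - k)!) := by
  simp only [bernsteinSum, Polynomial.eval_finsetSum, mul_sum]
  refine sum_congr rfl fun k hk ↦ ?_
  have hkm : k ≤ m := Nat.lt_succ_iff.mp ((mem_range.mp hk).trans_le hj)
  suffices (m.choose k : K) * x ^ k * (1 - x) ^ (m - k) =
      m ! * (x ^ k / k ! * ((1 - x) ^ (m - k) / (m - k)!)) by simpa [bernsteinPolynomial]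
  rw [Nat.cast_choose K hkm]
  field_simp

theorem tendsto_tailProb {m j : ℕ} (hj : j ≤ m) {t : ℕ → ℕ} (hts : ∀ s, t s ≤ s) {x : ℝ}
    (ht : Tendsto (fun s ↦ (t s / s : ℝ)) atTop (𝓝 x)) :
    Tendsto (fun s ↦ tailProb (m + 1) s (j + 1) (t s)) atTop
      (𝓝 ((bernsteinSum ℝ m (j + 1)).eval x)) := by
  obtain ⟨l, rfl⟩ := Nat.exists_eq_add_of_le' hj
  have hone : Tendsto (fun s : ℕ ↦ (s / s : ℝ)) atTop (𝓝 1) := by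
    simpa using tendsto_natCast_div_add_atTop (0 : ℝ)
  have hu : Tendsto (fun s ↦ ((s - t s : ℕ) / s : ℝ)) atTop (𝓝 (1 - x)) := by
    simpa only [Nat.cast_sub (hts _), sub_div] using hone.sub ht
  have hnum := tendsto_finsetSum (range (j + 1)) fun k _ ↦
    (tendsto_choose_div_pow tendsto_id ht j k).mul
      (tendsto_choose_div_pow tendsto_id hu l (l + j - k))
  have hden : Tendsto (fun s ↦ ((s + (l + j)).choose (l + j) : ℝ) / (s : ℝ) ^ (l + j)) atTop
      (𝓝 ((l + j)! : ℝ)⁻¹) := by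
    simpa using tendsto_choose_div_pow tendsto_id hone (l + j) (l + j)
  rw [eval_bernsteinSum (by omega), mul_comm, ← div_inv_eq_mul]
  refine (hnum.div hden (by positivity)).congr' ?_
  filter_upwards [eventually_ne_atTop 0] with s hs
  have hpow : (s : ℝ) ^ (l + j) ≠ 0 := by positivity
  rw [tailProb_eq_sum_choose_div (hts s), ← div_div_div_cancel_right₀ hpow, sum_div]
  simp only [Pi.div_apply, id]
  congr 1
  refine sum_congr rfl fun k hk ↦ ?_
  have hkm : k ≤ l + j := (Nat.lt_succ_iff.mp (mem_range.mp hk)).trans hj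
  rw [div_mul_div_comm, ← pow_add, Nat.add_sub_cancel' hkm]

lemma integral_comp_natCeil {E : Type*} [NormedAddCommGroup E] [NormedSpace ℝ E] [CompleteSpace E]
    (g : ℕ → E) (s : ℕ) : ∫ x in (0 : ℝ)..s, g ⌈x⌉₊ = ∑ t ∈ range s, g (t + 1) := by
  have hle (t : ℕ) : (t : ℝ) ≤ (t + 1 : ℕ) := by exact_mod_cast t.le_succ
  have hceil (t : ℕ) :
      Set.EqOn (fun _ ↦ g (t + 1)) (fun x : ℝ ↦ g ⌈x⌉₊) (Set.Ioc (t : ℝ) (t + 1 : ℕ)) := by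
    intro x hx
    simp only [(Nat.ceil_eq_iff t.succ_ne_zero).mpr hx]
  have hint (t : ℕ) :
      IntervalIntegrable (fun x : ℝ ↦ g ⌈x⌉₊) MeasureTheory.volume t (t + 1 : ℕ) := by
    rw [intervalIntegrable_iff_integrableOn_Ioc_of_le (hle t)]
    exact (MeasureTheory.integrableOn_const (by simp)).congr_fun (hceil t) measurableSet_Ioc
  rw [← Nat.cast_zero, ← intervalIntegral.sum_integral_adjacent_intervals
    (a := fun t : ℕ ↦ (t : ℝ)) fun t _ ↦ hint t]
  refine sum_congr rfl fun t _ ↦ ?_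
  rw [intervalIntegral.integral_of_le (hle t),
    ← MeasureTheory.setIntegral_congr_fun measurableSet_Ioc (hceil t)]
  simp

theorem tendsto_sum_div_atTop_integral {E : Type*} [NormedAddCommGroup E] [NormedSpace ℝ E]
    [CompleteSpace E] {g : ℕ → ℕ → E} {h : ℝ → E} {C : ℝ} (hg : ∀ s t, ‖g s t‖ ≤ C)
    (hlim : ∀ x ∈ Set.Ioc (0 : ℝ) 1, Tendsto (fun s : ℕ ↦ g s ⌈x * s⌉₊) atTop (𝓝 (h x))) :
    Tendsto (fun s : ℕ ↦ (s : ℝ)⁻¹ • ∑ t ∈ range s, g s (t + 1)) atTop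
      (𝓝 (∫ x in (0 : ℝ)..1, h x)) := by
  have hint : Tendsto (fun s : ℕ ↦ ∫ x in (0 : ℝ)..1, g s ⌈x * s⌉₊) atTop
      (𝓝 (∫ x in (0 : ℝ)..1, h x)) := by
    refine intervalIntegral.tendsto_integral_filter_of_dominated_convergence (fun _ ↦ C)
      (.of_forall fun s ↦ ?_) (.of_forall fun s ↦ .of_forall fun x _ ↦ hg _ _) (by simp)
      (.of_forall fun x hx ↦ hlim x (by rwa [Set.uIoc_of_le zero_le_one] at hx))
    exact (MeasureTheory.StronglyMeasurable.of_discrete (f := g s)).comp_measurable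
      (Nat.measurable_ceil.comp (measurable_mul_const _)) |>.aestronglyMeasurable
  refine hint.congr' ?_
  filter_upwards [eventually_ne_atTop 0] with s hs
  rw [intervalIntegral.integral_comp_mul_right (fun x ↦ g s ⌈x⌉₊) (by exact_mod_cast hs),
    zero_mul, one_mul, integral_comp_natCeil]

theorem tendsto_sum_tailProb_mul_one_sub {m j : ℕ} (hj : j ≤ m) :
    Tendsto (fun s : ℕ ↦ (s : ℝ)⁻¹ • ∑ t ∈ range s,
        tailProb (m + 1) s (j + 1) (t + 1) * (1 - tailProb (m + 1) s (j + 1) (t + 1))) atTop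
      (𝓝 (∫ x in (0 : ℝ)..1,
        (bernsteinSum ℝ m (j + 1) * (1 - bernsteinSum ℝ m (j + 1))).eval x)) := by
  refine tendsto_sum_div_atTop_integral (C := 1)
    (g := fun s t ↦ tailProb (m + 1) s (j + 1) t * (1 - tailProb (m + 1) s (j + 1) t))
    (fun s t ↦ ?_) fun x hx ↦ ?_
  · have h0 := tailProb_nonneg (m + 1) s (j + 1) t
    have h1 := tailProb_le_one (m + 1) s (j + 1) t
    rw [Real.norm_of_nonneg (mul_nonneg h0 (sub_nonneg.mpr h1))]
    exact mul_le_one₀ h1 (sub_nonneg.mpr h1) (sub_le_self 1 h0)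
  · have hceil (s : ℕ) : ⌈x * s⌉₊ ≤ s :=
      Nat.ceil_le.mpr (mul_le_of_le_one_left s.cast_nonneg hx.2)
    have hdiv : Tendsto (fun s : ℕ ↦ (⌈x * s⌉₊ / s : ℝ)) atTop (𝓝 x) :=
      (tendsto_nat_ceil_mul_div_atTop hx.1.le).comp tendsto_natCast_atTop_atTop
    have htail := tendsto_tailProb hj hceil hdiv
    simpa using htail.mul (htail.const_sub 1)

theorem tendsto_sum_EMD_div_card_sq_div (m : ℕ) :
    Tendsto (fun s : ℕ ↦
        ((∑ p ∈ antidiagonalTuple (m + 1) s ×ˢ antidiagonalTuple (m + 1) s, EMD p.1 p.2 : ℕ) : ℝ) /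
          #(antidiagonalTuple (m + 1) s) ^ 2 / s) atTop
      (𝓝 (2 * ∫ x in (0 : ℝ)..1, (bernsteinSpread ℝ m).eval x)) := by
  simp only [bernsteinSpread, Polynomial.eval_finsetSum]
  rw [intervalIntegral.integral_finsetSum fun j _ ↦
    (Polynomial.continuous _).intervalIntegrable _ _, mul_sum]
  refine (tendsto_finsetSum _ fun j hj ↦ (tendsto_sum_tailProb_mul_one_sub
    (Nat.lt_succ_iff.mp (mem_range.mp hj))).const_mul 2).congr fun s ↦ ?_
  rw [sum_EMD_div_card_sq, sum_div]
  refine sum_congr rfl fun j _ ↦ ?_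
  rw [smul_eq_mul, div_eq_inv_mul, mul_left_comm]

/-! ### Integrating the binomial spread -/

lemma integral_pow_mul_one_sub_pow (a b : ℕ) :
    ∫ x in (0 : ℝ)..1, x ^ a * (1 - x) ^ b = (a ! * b ! / (a + b + 1)! : ℝ) := by
  have h := Complex.betaIntegral_eq_Gamma_mul_div (a + 1) (b + 1)
    (by rw [← Nat.cast_succ, Complex.natCast_re]; positivity)
    (by rw [← Nat.cast_succ, Complex.natCast_re]; positivity)
  have hbeta : Complex.betaIntegral (a + 1) (b + 1) =
      ((∫ x in (0 : ℝ)..1, x ^ a * (1 - x) ^ b : ℝ) : ℂ) := by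
    simp [Complex.betaIntegral, ← intervalIntegral.integral_ofReal]
  rw [hbeta, show (a + 1 + (b + 1) : ℂ) = ((a + b + 1 : ℕ) : ℂ) + 1 by push_cast; ring] at h
  simp only [Complex.Gamma_nat_eq_factorial] at h
  apply Complex.ofReal_injective
  simpa using h

lemma choose_neg_three_halves (k : ℕ) :
    Ring.choose (-3 / 2 : ℝ) k = (-1 / 4) ^ k * ((2 * k + 1)! / (k ! : ℝ) ^ 2) := by
  induction k with
  | zero => simp
  | succ k ih =>
    have h : (k + 1 : ℝ) * Ring.choose (-3 / 2 : ℝ) (k + 1) =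
        Ring.choose (-3 / 2 : ℝ) k * (-3 / 2 - k) := by
      simpa using Ring.choose_smul_choose (-3 / 2 : ℝ) (Nat.le_succ k)
    rw [← mul_right_inj' k.cast_add_one_ne_zero, h, ih,
      show 2 * (k + 1) + 1 = 2 * k + 1 + 1 + 1 by omega]
    simp only [Nat.factorial_succ]
    push_cast
    field_simp
    ring

lemma choose_neg_three (m : ℕ) :
    Ring.choose (-3 : ℝ) m = (-1) ^ m * (m + 2).choose 2 := by
  rw [Ring.choose_neg, show (3 + m - 1 : ℝ) = ((m + 2 : ℕ) : ℝ) by push_cast; ring,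
    Ring.choose_natCast, Nat.choose_symm_add]
  simp [Int.negOnePow_def, Units.smul_def]

-- The coefficients of `(1 - 4x)^(-3/2)` convolve to those of its square `(1 - 4x)^(-3)`.
theorem sum_antidiagonal_factorial_div (m : ℕ) :
    ∑ p ∈ antidiagonal m,
      ((2 * p.1 + 1)! / (p.1 ! : ℝ) ^ 2) * ((2 * p.2 + 1)! / (p.2 ! : ℝ) ^ 2) =
      4 ^ m * (m + 2).choose 2 := by
  have vandermonde := Ring.add_choose_eq m (Commute.refl (-3 / 2 : ℝ))
  rw [show (-3 / 2 + -3 / 2 : ℝ) = -3 by norm_num, choose_neg_three] at vandermonde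
  calc _ = ∑ p ∈ antidiagonal m,
        (-4) ^ m * (Ring.choose (-3 / 2 : ℝ) p.1 * Ring.choose (-3 / 2 : ℝ) p.2) := by
        refine sum_congr rfl fun p hp ↦ ?_
        have hpow : (-4 : ℝ) ^ m * ((-1 / 4) ^ p.1 * (-1 / 4) ^ p.2) = 1 := by
          rw [← pow_add, mem_antidiagonal.mp hp, ← mul_pow]
          norm_num
        rw [choose_neg_three_halves, choose_neg_three_halves]
        linear_combination -((2 * p.1 + 1)! / (p.1 ! : ℝ) ^ 2 *
          ((2 * p.2 + 1)! / (p.2 ! : ℝ) ^ 2)) * hpow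
    _ = 4 ^ m * (m + 2).choose 2 := by
        rw [← mul_sum, ← vandermonde, ← mul_assoc, ← mul_pow]
        norm_num

lemma integral_sum_bernsteinPolynomial_sq (m : ℕ) :
    ∫ x in (0 : ℝ)..1,
      (X * (1 - X) * ∑ k ∈ range (m + 1), bernsteinPolynomial ℝ m k ^ 2).eval x =
      (m ! : ℝ) ^ 2 * (4 ^ m * (m + 2).choose 2) / (2 * m + 3)! := by
  have expand (x : ℝ) :
      (X * (1 - X) * ∑ k ∈ range (m + 1), bernsteinPolynomial ℝ m k ^ 2).eval x =
        ∑ k ∈ range (m + 1),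
          (m.choose k : ℝ) ^ 2 * (x ^ (2 * k + 1) * (1 - x) ^ (2 * (m - k) + 1)) := by
    simp only [bernsteinPolynomial, mul_sum, Polynomial.eval_finsetSum]
    refine sum_congr rfl fun k _ ↦ ?_
    simp
    ring
  simp only [expand]
  rw [intervalIntegral.integral_finsetSum fun k _ ↦
    Continuous.intervalIntegrable (by fun_prop) _ _]
  simp only [intervalIntegral.integral_const_mul, integral_pow_mul_one_sub_pow]
  rw [← sum_antidiagonal_factorial_div, sum_antidiagonal_eq_sum_range_succ
    fun a b ↦ ((2 * a + 1)! / (a ! : ℝ) ^ 2) * ((2 * b + 1)! / (b ! : ℝ) ^ 2), mul_sum, sum_div]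
  refine sum_congr rfl fun k hk ↦ ?_
  have hkm : k ≤ m := Nat.lt_succ_iff.mp (mem_range.mp hk)
  rw [Nat.cast_choose ℝ hkm, show 2 * k + 1 + (2 * (m - k) + 1) + 1 = 2 * m + 3 by omega]
  field_simp

theorem two_mul_integral_bernsteinSpread (m : ℕ) :
    2 * ∫ x in (0 : ℝ)..1, (bernsteinSpread ℝ m).eval x =
      m * 4 ^ m * (m ! : ℝ) ^ 2 / (2 * (2 * m + 1)!) := by
  induction m with
  | zero => simp [bernsteinSpread, bernsteinSum_self_succ]
  | succ m ih =>
    simp only [bernsteinSpread_succ, Polynomial.eval_add]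
    rw [intervalIntegral.integral_add (Polynomial.continuous _ |>.intervalIntegrable _ _)
      (Polynomial.continuous _ |>.intervalIntegrable _ _), mul_add, ih,
      integral_sum_bernsteinPolynomial_sq, Nat.cast_choose_two,
      show 2 * (m + 1) + 1 = 2 * m + 1 + 1 + 1 by omega,
      show 2 * m + 3 = 2 * m + 1 + 1 + 1 by omega]
    simp only [Nat.factorial_succ]
    push_cast
    field_simp
    ring

lemma sqrt_pi_mul_Gamma_div_Gamma_add_half (m : ℕ) :
    √Real.pi * Real.Gamma (m + 1) / Real.Gamma (m + 1 + 1 / 2) =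
      2 * 4 ^ m * (m ! : ℝ) ^ 2 / (2 * m + 1)! := by
  have duplication := Real.Gamma_mul_Gamma_add_half (m + 1)
  have hpow : (2 : ℝ) ^ (1 - 2 * (m + 1 : ℝ)) = (2 * 4 ^ m)⁻¹ := by
    rw [show (1 - 2 * (m + 1 : ℝ)) = -((2 * m + 1 : ℕ) : ℝ) by push_cast; ring,
      Real.rpow_neg two_pos.le, Real.rpow_natCast, pow_succ', pow_mul]
    norm_num
  rw [hpow, show 2 * (m + 1 : ℝ) = ((2 * m + 1 : ℕ) : ℝ) + 1 by push_cast; ring,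
    Real.Gamma_nat_eq_factorial, Real.Gamma_nat_eq_factorial] at duplication
  have hGamma : Real.Gamma (m + 1 + 1 / 2) ≠ 0 := (Real.Gamma_pos_of_pos (by positivity)).ne'
  rw [Real.Gamma_nat_eq_factorial, div_eq_iff hGamma]
  field_simp at duplication ⊢
  linear_combination -duplication

/-- Remark 4.4: with `E(s)` the expected EMD over uniformly random pairs of weak
compositions of `s` into `n` parts, `E(s)/s → √π·(n-1)·Γ(n) / (4·Γ(n+1/2))` as
`s → ∞`. -/
theorem expected_EMD_limit (n : ℕ) (hn : 2 ≤ n) :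
    Filter.Tendsto
      (fun s : ℕ =>
        (((∑ p ∈ Finset.Nat.antidiagonalTuple n s ×ˢ Finset.Nat.antidiagonalTuple n s,
              EMD p.1 p.2 : ℕ) : ℝ) / (((s + n - 1).choose s : ℝ)) ^ 2) / (s : ℝ))
      Filter.atTop
      (nhds (Real.sqrt Real.pi * ((n : ℝ) - 1) * Real.Gamma (n : ℝ)
        / (4 * Real.Gamma ((n : ℝ) + 1 / 2)))) := by
  obtain ⟨m, rfl⟩ : ∃ m, n = m + 1 := ⟨n - 1, by omega⟩
  have hcard (s : ℕ) : (s + (m + 1) - 1).choose s = #(antidiagonalTuple (m + 1) s) := by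
    rw [card_antidiagonalTuple_succ, ← add_assoc, Nat.add_sub_cancel,
      Nat.choose_symm_add]
  have hlim : √Real.pi * ((m + 1 : ℕ) - 1) * Real.Gamma (m + 1 : ℕ) /
      (4 * Real.Gamma ((m + 1 : ℕ) + 1 / 2)) =
        2 * ∫ x in (0 : ℝ)..1, (bernsteinSpread ℝ m).eval x := by
    push_cast
    linear_combination (m / 4 : ℝ) * sqrt_pi_mul_Gamma_div_Gamma_add_half m -
      two_mul_integral_bernsteinSpread m
  simp only [hcard, hlim]
  exact tendsto_sum_EMD_div_card_sq_div m
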